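/- Let t ≥ 3 and ℓ ∈ {2,3,4,5} be integers and let L(t,ℓ) be the lollipop graph on n = t + ℓ − 1 vertices. Then the sequence (−1)^{n−1} c_0(L(t,ℓ)), …, (−1)^{n−1} c_{n−2}(L(t,ℓ)) of coefficients of the distance characteristic polynomial is unimodal with peak at index ⌊(n−1)/2⌋. -/

import Mathlib

/-!
Write `t = m + 2`. The `m + 1` clique vertices off the path are pairwise at distance `1` and have
the same distances to all other vertices, so the distance characteristic polynomial of `L(t, l)` is
`(1 + x) ^ m * q`, with `q` the characteristic polynomial of a quotient matrix of size `l + 1`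
(`det_blowup`, `charpoly_eval`). For `l = 2, 3, 4, 5` the polynomial `q` is computed explicitly
(`det_quotient`), and the sequence in the theorem is that of the coefficients of
`(1 + x) ^ m * (-q)`.

The coefficients of `-q` are positive and log-concave up to degree `l`, where the value is `m`; then
comes the leading coefficient `-1`. Multiplying by `1 + x` preserves this shape and lowers the value
just below the leading term by `1`, so it can be done `m` times (`IsShape.step`, `IsShape.pow`).
Hence the coefficients with index at most `n - 2 = m + l - 1` are positive and log-concave, and
therefore unimodal. To locate the peak it suffices to compare the coefficient at
`⌊(n - 1) / 2⌋ = ⌊(m + l) / 2⌋` with its two neighbours (`IsShape.unimodal`). These are fixed linear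
combinations of binomial coefficients close to the middle of row `m`; dividing out a common factor
leaves, for each `l` and each parity of `m`, a polynomial in `⌊m / 2⌋` with nonnegative
coefficients (`coeff_peak`).
-/

/-- The lollipop graph `L(t,ℓ)` on `n = t + ℓ - 1` vertices: vertices `0, …, t-1` form a
clique `K_t`, and vertices `t-1, t, …, t+ℓ-2` form a path on `ℓ` vertices whose endpoint
`t-1` is identified with a vertex of the clique. -/
def lollipop (t l : ℕ) : SimpleGraph (Fin (t + l - 1)) :=
  SimpleGraph.fromRel (fun u v =>
    ((u : ℕ) < t ∧ (v : ℕ) < t) ∨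
    (t - 1 ≤ (u : ℕ) ∧ (v : ℕ) = (u : ℕ) + 1))

/-- `distCoeff G k` is the coefficient `c_k(G)` of `x^k` in `det (D(G) - x I)`, where
`D(G)` is the distance matrix of `G`; note `det (D - x I) = (-1)^n det (x I - D)`. -/
noncomputable def distCoeff {V : Type*} [Fintype V] [DecidableEq V]
    (G : SimpleGraph V) (k : ℕ) : ℝ :=
  (-1 : ℝ) ^ (Fintype.card V) *
    (Matrix.charpoly (Matrix.of fun u v : V => (G.dist u v : ℝ))).coeff k

/-- `(-1)^(n-1) c_i(L(t,ℓ))` for the lollipop graph on `n = t + ℓ - 1` vertices. -/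
noncomputable def lollipopNormCoeff (t l i : ℕ) : ℝ :=
  (-1 : ℝ) ^ (t + l - 1 - 1) * distCoeff (lollipop t l) i

/-! ### Distances in the lollipop graph -/

theorem lollipop_adj_iff (t l : ℕ) (u v : Fin (t + l - 1)) :
    (lollipop t l).Adj u v ↔ u ≠ v ∧ (((u : ℕ) < t ∧ (v : ℕ) < t) ∨
      (t - 1 ≤ (u : ℕ) ∧ (v : ℕ) = (u : ℕ) + 1) ∨ (t - 1 ≤ (v : ℕ) ∧ (u : ℕ) = (v : ℕ) + 1)) := by
  simp only [lollipop, SimpleGraph.fromRel_adj]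
  tauto

/-- Write `t = m + 2` and let the height of a vertex `u` be `u - m` truncated at `0`: it vanishes on
the clique apart from the attaching vertex `m + 1`, which has height `1`, and it increases by `1`
along the path. Heights of adjacent vertices differ by at most `1`. -/
theorem lollipop_height_le_length (m l : ℕ) (u v : Fin (m + 2 + l - 1))
    (p : (lollipop (m + 2) l).Walk u v) :
    (v : ℕ) - m ≤ ((u : ℕ) - m) + p.length ∧ (u : ℕ) - m ≤ ((v : ℕ) - m) + p.length := by
  induction p with
  | nil => simp
  | cons h p ih =>
    rw [lollipop_adj_iff] at h
    simp only [SimpleGraph.Walk.length_cons]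
    omega

theorem lollipop_exists_walk (m l : ℕ) (k : ℕ) (u v : Fin (m + 2 + l - 1)) (hv : (v : ℕ) = k)
    (huv : (u : ℕ) < v) :
    ∃ p : (lollipop (m + 2) l).Walk u v, p.length ≤ max 1 (((v : ℕ) - m) - ((u : ℕ) - m)) := by
  induction k generalizing v with
  | zero => omega
  | succ k ih =>
    by_cases hadj : (lollipop (m + 2) l).Adj u v
    · exact ⟨hadj.toWalk, by simp⟩
    · have hne : u ≠ v := by
        rintro rfl
        exact lt_irrefl _ huv
      have hadj' := hadj
      rw [lollipop_adj_iff] at hadj'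
      have hw : k < m + 2 + l - 1 := by omega
      obtain ⟨p, hp⟩ := ih ⟨k, hw⟩ rfl (by simp only; omega)
      have hlast : (lollipop (m + 2) l).Adj ⟨k, hw⟩ v := by
        rw [lollipop_adj_iff]
        refine ⟨fun h => ?_, Or.inr (Or.inl ⟨?_, hv⟩)⟩
        · have := congrArg Fin.val h
          simp only at this
          omega
        · simp only
          omega
      refine ⟨p.concat hlast, ?_⟩
      rw [SimpleGraph.Walk.length_concat]
      simp only at hp
      omega

theorem lollipop_dist_of_lt (m l : ℕ) (u v : Fin (m + 2 + l - 1)) (huv : (u : ℕ) < v) :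
    (lollipop (m + 2) l).dist u v = max 1 (((v : ℕ) - m) - ((u : ℕ) - m)) := by
  obtain ⟨p, hp⟩ := lollipop_exists_walk m l v u v rfl huv
  have hle := SimpleGraph.dist_le p
  obtain ⟨w, hw⟩ := p.reachable.exists_walk_length_eq_dist
  have h1 := lollipop_height_le_length m l u v w
  have hne : u ≠ v := by
    rintro rfl
    exact lt_irrefl _ huv
  have hpos := p.reachable.pos_dist_of_ne hne
  omega

/-! ### The quotient of the distance matrix -/

/-- Distances between vertices in terms of their heights `0, …, l`. The diagonal entry at height
`0` is `1`, the distance between two distinct clique vertices of height `0`; the diagonal of the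
distance matrix itself is accounted for separately in `lollipop_dist_vertexEquiv`. -/
def classDist (l : ℕ) : Matrix (Fin (l + 1)) (Fin (l + 1)) ℝ :=
  Matrix.of fun i j => if i = 0 ∧ j = 0 then 1 else |((i : ℕ) : ℝ) - ((j : ℕ) : ℝ)|

/-- The height of a vertex: the `m + 1` clique vertices other than the attaching one have height
`0`, and the `i`-th path vertex has height `i + 1`. -/
def vertexClass (m l : ℕ) : Fin (m + 1) ⊕ Fin l → Fin (l + 1) :=
  Sum.elim (fun _ => 0) Fin.succ

/-- The vertices of `L(m+2, l)` split into the `m + 1` clique vertices off the path and the `l`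
path vertices. -/
def vertexEquiv (m l : ℕ) : Fin (m + 1) ⊕ Fin l ≃ Fin (m + 2 + l - 1) :=
  finSumFinEquiv.trans (finCongr (by omega))

theorem vertexEquiv_inl (m l : ℕ) (i : Fin (m + 1)) :
    (vertexEquiv m l (Sum.inl i) : ℕ) = i := by simp [vertexEquiv]

theorem vertexEquiv_inr (m l : ℕ) (i : Fin l) :
    (vertexEquiv m l (Sum.inr i) : ℕ) = m + 1 + i := by simp [vertexEquiv]

theorem vertexClass_eq_sub (m l : ℕ) (u : Fin (m + 1) ⊕ Fin l) :
    (vertexClass m l u : ℕ) = (vertexEquiv m l u : ℕ) - m := by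
  rcases u with i | i
  · rw [vertexEquiv_inl]
    simp only [vertexClass, Sum.elim_inl, Fin.val_zero]
    omega
  · rw [vertexEquiv_inr]
    simp only [vertexClass, Sum.elim_inr, Fin.val_succ]
    omega

theorem lollipop_dist_vertexEquiv (m l : ℕ) (u v : Fin (m + 1) ⊕ Fin l) :
    ((lollipop (m + 2) l).dist (vertexEquiv m l u) (vertexEquiv m l v) : ℝ) =
      classDist l (vertexClass m l u) (vertexClass m l v) -
        if u = v ∧ vertexClass m l u = 0 then 1 else 0 := by
  have key : ∀ a b : Fin (m + 1) ⊕ Fin l, (vertexEquiv m l a : ℕ) < vertexEquiv m l b →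
      ((lollipop (m + 2) l).dist (vertexEquiv m l a) (vertexEquiv m l b) : ℝ) =
        classDist l (vertexClass m l b) (vertexClass m l a) := by
    intro a b hab
    rw [lollipop_dist_of_lt m l _ _ hab]
    have ha := vertexClass_eq_sub m l a
    have hb := vertexClass_eq_sub m l b
    rw [← ha, ← hb]
    simp only [classDist, Matrix.of_apply, Fin.ext_iff, Fin.val_zero]
    split_ifs with h
    · rw [h.1, h.2]; simp
    · have h1 : (vertexClass m l a : ℕ) + 1 ≤ vertexClass m l b := by omega
      rw [max_eq_right (by omega), Nat.cast_sub (by omega), abs_of_nonneg]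
      have : ((vertexClass m l a : ℕ) : ℝ) + 1 ≤ (vertexClass m l b : ℕ) := by exact_mod_cast h1
      linarith
  have symm : ∀ i j, classDist l i j = classDist l j i := by
    intro i j
    simp only [classDist, Matrix.of_apply, and_comm, abs_sub_comm]
  rcases lt_trichotomy (vertexEquiv m l u : ℕ) (vertexEquiv m l v) with h | h | h
  · have hne : u ≠ v := by rintro rfl; exact lt_irrefl _ h
    rw [key u v h, symm]
    simp [hne]
  · have he : u = v := (vertexEquiv m l).injective (Fin.ext h)
    subst he
    simp [classDist]
  · have hne : u ≠ v := by rintro rfl; exact lt_irrefl _ h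
    rw [SimpleGraph.dist_comm, key v u h]
    simp [hne]

open Matrix in
/-- A matrix that depends on its indices only through `h`, subtracted from a diagonal matrix of the
same kind, has its determinant given by a matrix indexed by the values of `h`, with columns
weighted by the sizes of the fibres. This is `det (1 - A * B) = det (1 - B * A)`, with the
incidence matrix of `h` in the role of the rectangular factor. -/
theorem det_blowup {V W : Type*} [Fintype V] [Fintype W] [DecidableEq V] [DecidableEq W]
    (h : V → W) (d : W → ℝ) (hd : ∀ w, d w ≠ 0) (K : Matrix W W ℝ) :
    (diagonal (d ∘ h) - K.submatrix h h).det * ∏ w, d w =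
      (∏ v, d (h v)) *
        (diagonal d - K * diagonal fun w => ∑ v, if h v = w then (1 : ℝ) else 0).det := by
  set S : Matrix V W ℝ := Matrix.of fun v w => if h v = w then 1 else 0 with hS
  have hK : K.submatrix h h = S * (K * Sᵀ) := by
    ext u v
    simp [hS, Matrix.mul_apply]
  have hfac : diagonal (d ∘ h) - K.submatrix h h =
      diagonal (d ∘ h) * (1 - (diagonal (fun v => (d (h v))⁻¹) * S) * (K * Sᵀ)) := by
    rw [Matrix.mul_sub, Matrix.mul_one, hK, Matrix.mul_assoc _ S,
      ← Matrix.mul_assoc (diagonal (d ∘ h)), diagonal_mul_diagonal]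
    simp [hd]
  have hcnt : (Sᵀ * (diagonal (fun v => (d (h v))⁻¹) * S)) * diagonal d =
      diagonal fun w => ∑ v, if h v = w then (1 : ℝ) else 0 := by
    ext i j
    rw [mul_diagonal, Matrix.mul_apply, Finset.sum_mul]
    simp only [diagonal_mul, transpose_apply, hS, of_apply, diagonal_apply]
    split_ifs with hij
    · subst hij
      refine Finset.sum_congr rfl fun v _ => ?_
      split_ifs with hv
      · subst hv
        simp [hd]
      · simp
    · refine Finset.sum_eq_zero fun v _ => ?_
      split_ifs with h1 h2
      · exact absurd (h1.symm.trans h2) hij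
      all_goals simp
  rw [hfac, det_mul, det_diagonal, det_one_sub_mul_comm, mul_assoc,
    ← det_diagonal (d := d), ← det_mul, Matrix.sub_mul, Matrix.one_mul, Matrix.mul_assoc K,
    Matrix.mul_assoc K, hcnt]
  rfl

open Matrix Polynomial in
/-- The determinant on the right has size `l + 1`, independently of `m`. Positivity of `x` keeps the
diagonal invertible, as `det_blowup` requires. -/
theorem charpoly_eval (m l : ℕ) (x : ℝ) (hx : 0 < x) :
    (Matrix.charpoly (Matrix.of fun u v : Fin (m + 2 + l - 1) =>
      ((lollipop (m + 2) l).dist u v : ℝ))).eval x =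
    (1 + x) ^ m * (diagonal (Fin.cons (1 + x) fun _ : Fin l => x) -
      classDist l * diagonal (Fin.cons ((m : ℝ) + 1) fun _ : Fin l => 1)).det := by
  set d : Fin (l + 1) → ℝ := Fin.cons (1 + x) fun _ : Fin l => x with hd
  have hd0 : ∀ w, d w ≠ 0 := by
    intro w
    refine Fin.cases ?_ (fun i => ?_) w
    · simp only [hd, Fin.cons_zero]
      positivity
    · simp only [hd, Fin.cons_succ]
      positivity
  have hb := det_blowup (vertexClass m l) d hd0 (classDist l)
  have hcnt : (fun w => ∑ v, if vertexClass m l v = w then (1 : ℝ) else 0) =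
      Fin.cons ((m : ℝ) + 1) fun _ : Fin l => 1 := by
    funext w
    refine Fin.cases ?_ (fun i => ?_) w
    · simp [vertexClass, Fin.succ_ne_zero]
    · simp [vertexClass, (Fin.succ_ne_zero _).symm]
  have hmat : scalar (Fin (m + 1) ⊕ Fin l) x - Matrix.of (fun u v =>
      ((lollipop (m + 2) l).dist (vertexEquiv m l u) (vertexEquiv m l v) : ℝ)) =
      diagonal (d ∘ vertexClass m l) - (classDist l).submatrix (vertexClass m l)
        (vertexClass m l) := by
    ext u v
    simp only [Matrix.sub_apply, of_apply, submatrix_apply, lollipop_dist_vertexEquiv, scalar_apply,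
      diagonal_apply, Function.comp]
    by_cases huv : u = v
    · subst huv
      rcases u with i | i
      · simp [vertexClass, hd]; ring
      · simp [vertexClass, hd, Fin.succ_ne_zero]
    · simp [huv]
  have hre : (Matrix.of fun u v : Fin (m + 2 + l - 1) => ((lollipop (m + 2) l).dist u v : ℝ)) =
      Matrix.reindex (vertexEquiv m l) (vertexEquiv m l) (Matrix.of (fun u v =>
      ((lollipop (m + 2) l).dist (vertexEquiv m l u) (vertexEquiv m l v) : ℝ))) := by
    ext u v
    simp
  rw [hre, charpoly_reindex, Matrix.eval_charpoly, hmat]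
  rw [hcnt] at hb
  have hp1 : ∏ w, d w = (1 + x) * x ^ l := by
    simp [hd, Fin.prod_univ_succ]
  have hp2 : ∏ v, d (vertexClass m l v) = (1 + x) ^ (m + 1) * x ^ l := by
    simp [hd, vertexClass]
  rw [hp1, hp2] at hb
  have hne : (1 + x) * x ^ l ≠ 0 := by positivity
  apply mul_right_cancel₀ hne
  rw [hb]
  ring

/-! ### The explicit factorization of the characteristic polynomial -/

/-- For `2 ≤ l ≤ 5`, `quotCoeff l m j` is the coefficient of `x ^ j` in `-q`, where
`(1 + x) ^ m * q` is the distance characteristic polynomial of `L(m+2, l)`. -/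
def quotCoeff : ℕ → ℝ → ℕ → ℝ
  | 2, m, 0 => 3 * m + 4
  | 2, m, 1 => 5 * m + 6
  | 2, m, 2 => m
  | 2, _, 3 => -1
  | 3, m, 0 => 8 * m + 12
  | 3, m, 1 => 22 * m + 32
  | 3, m, 2 => 14 * m + 20
  | 3, m, 3 => m
  | 3, _, 4 => -1
  | 4, m, 0 => 20 * m + 32
  | 4, m, 1 => 76 * m + 120
  | 4, m, 2 => 88 * m + 140
  | 4, m, 3 => 30 * m + 50
  | 4, m, 4 => m
  | 4, _, 5 => -1
  | 5, m, 0 => 48 * m + 80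
  | 5, m, 1 => 232 * m + 384
  | 5, m, 2 => 388 * m + 648
  | 5, m, 3 => 258 * m + 448
  | 5, m, 4 => 55 * m + 105
  | 5, m, 5 => m
  | 5, _, 6 => -1
  | _, _, _ => 0

set_option maxHeartbeats 4000000 in
open Matrix in
theorem det_quotient (l : ℕ) (hl : l ∈ ({2, 3, 4, 5} : Set ℕ)) (m x : ℝ) :
    (diagonal (Fin.cons (1 + x) fun _ : Fin l => x) -
      classDist l * diagonal (Fin.cons (m + 1) fun _ : Fin l => 1)).det =
      -∑ j ∈ Finset.range (l + 2), quotCoeff l m j * x ^ j := by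
  have hval : ∀ l : ℕ, (diagonal (Fin.cons (1 + x) fun _ : Fin l => x) -
      classDist l * diagonal (Fin.cons (m + 1) fun _ : Fin l => 1)) =
      Matrix.of fun i j : Fin (l + 1) => (if i = j then (if i = 0 then 1 + x else x) else 0) -
        (if i = 0 ∧ j = 0 then 1 else |((i : ℕ) : ℝ) - ((j : ℕ) : ℝ)|) *
          (if j = 0 then m + 1 else 1) := by
    intro l
    have hcons : ∀ (a b : ℝ) (i : Fin (l + 1)),
        (Fin.cons a fun _ : Fin l => b : Fin (l + 1) → ℝ) i = if i = 0 then a else b := by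
      intro a b i
      refine Fin.cases ?_ (fun i => ?_) i <;> simp
    ext i j
    simp only [Matrix.sub_apply, mul_diagonal, diagonal_apply, hcons, of_apply, classDist]
  rw [hval]
  simp only [Set.mem_insert_iff, Set.mem_singleton_iff] at hl
  rcases hl with rfl | rfl | rfl | rfl
  · have : (Matrix.of fun i j : Fin (2 + 1) =>
        (if i = j then (if i = 0 then 1 + x else x) else 0) -
        (if i = 0 ∧ j = 0 then 1 else |((i : ℕ) : ℝ) - ((j : ℕ) : ℝ)|) *
          (if j = 0 then m + 1 else 1)) =
            !![x - m, -1, -2; -(m + 1), x, -1; -2 * (m + 1), -1, x] := by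
      ext i j
      fin_cases i <;> fin_cases j <;> norm_num <;> try ring
    rw [this]
    simp [Matrix.det_succ_row_zero, Fin.sum_univ_succ, Fin.succAbove, Finset.sum_range_succ,
      quotCoeff]
    ring
  · have : (Matrix.of fun i j : Fin (3 + 1) =>
        (if i = j then (if i = 0 then 1 + x else x) else 0) -
        (if i = 0 ∧ j = 0 then 1 else |((i : ℕ) : ℝ) - ((j : ℕ) : ℝ)|) *
          (if j = 0 then m + 1 else 1)) = !![x - m, -1, -2, -3; -(m + 1), x, -1, -2;
            -2 * (m + 1), -1, x, -1; -3 * (m + 1), -2, -1, x] := by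
      ext i j
      fin_cases i <;> fin_cases j <;> norm_num <;> try ring
    rw [this]
    simp [Matrix.det_succ_row_zero, Fin.sum_univ_succ, Fin.succAbove, Finset.sum_range_succ,
      quotCoeff]
    ring
  · have : (Matrix.of fun i j : Fin (4 + 1) =>
        (if i = j then (if i = 0 then 1 + x else x) else 0) -
        (if i = 0 ∧ j = 0 then 1 else |((i : ℕ) : ℝ) - ((j : ℕ) : ℝ)|) *
          (if j = 0 then m + 1 else 1)) = !![x - m, -1, -2, -3, -4; -(m + 1), x, -1, -2, -3;
            -2 * (m + 1), -1, x, -1, -2; -3 * (m + 1), -2, -1, x, -1;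
            -4 * (m + 1), -3, -2, -1, x] := by
      ext i j
      fin_cases i <;> fin_cases j <;> norm_num <;> try ring
    rw [this]
    simp [Matrix.det_succ_row_zero, Fin.sum_univ_succ, Fin.succAbove, Finset.sum_range_succ,
      quotCoeff]
    ring
  · have : (Matrix.of fun i j : Fin (5 + 1) =>
        (if i = j then (if i = 0 then 1 + x else x) else 0) -
        (if i = 0 ∧ j = 0 then 1 else |((i : ℕ) : ℝ) - ((j : ℕ) : ℝ)|) *
          (if j = 0 then m + 1 else 1)) = !![x - m, -1, -2, -3, -4, -5;
            -(m + 1), x, -1, -2, -3, -4; -2 * (m + 1), -1, x, -1, -2, -3;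
            -3 * (m + 1), -2, -1, x, -1, -2; -4 * (m + 1), -3, -2, -1, x, -1;
            -5 * (m + 1), -4, -3, -2, -1, x] := by
      ext i j
      fin_cases i <;> fin_cases j <;> norm_num <;> try ring
    rw [this]
    simp [Matrix.det_succ_row_zero, Fin.sum_univ_succ, Fin.succAbove, Finset.sum_range_succ,
      quotCoeff]
    ring

open Polynomial

/-- The polynomial with coefficients `quotCoeff l m`. -/
noncomputable def quotPoly (l : ℕ) (m : ℝ) : ℝ[X] :=
  ∑ j ∈ Finset.range (l + 2), C (quotCoeff l m j) * X ^ j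

theorem charpoly_lollipop (m l : ℕ) (hl : l ∈ ({2, 3, 4, 5} : Set ℕ)) :
    -Matrix.charpoly (Matrix.of fun u v : Fin (m + 2 + l - 1) =>
      ((lollipop (m + 2) l).dist u v : ℝ)) = (1 + X) ^ m * quotPoly l m := by
  apply Polynomial.eq_of_infinite_eval_eq
  refine (Set.Ioi_infinite (0 : ℝ)).mono fun x hx => ?_
  rw [Set.mem_ofPred_eq, eval_neg, charpoly_eval m l x hx, det_quotient l hl]
  simp [quotPoly, eval_finsetSum]

/-! ### Log-concavity under multiplication by `1 + X` -/

/-- `p` has degree `N + 1` and leading coefficient `-1`, its coefficient at `N` is the natural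
number `s`, the coefficients below `N` are positive, and those up to `N` are log-concave. The
number `s` counts how often `p` can be multiplied by `1 + X` before this shape is lost. -/
structure IsShape (p : ℝ[X]) (N s : ℕ) : Prop where
  pos : ∀ k < N, 0 < p.coeff k
  coeff_last : p.coeff N = s
  coeff_top : p.coeff (N + 1) = -1
  logConcave : ∀ k, k + 2 ≤ N → p.coeff k * p.coeff (k + 2) ≤ p.coeff (k + 1) ^ 2
  coeff_zero : ∀ k, N + 1 < k → p.coeff k = 0

theorem coeff_one_add_X_mul_succ (p : ℝ[X]) (k : ℕ) :
    ((1 + X) * p).coeff (k + 1) = p.coeff (k + 1) + p.coeff k := by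
  rw [add_mul, one_mul, coeff_add, coeff_X_mul]

theorem coeff_one_add_X_mul_zero (p : ℝ[X]) : ((1 + X) * p).coeff 0 = p.coeff 0 := by
  simp [add_mul]

/-- With `a, b, c, d` consecutive coefficients of `p`, the new log-concavity inequality
`(a + b) * (c + d) ≤ (b + c) ^ 2` is the sum of `a * c ≤ b ^ 2`, `b * d ≤ c ^ 2` and
`a * d ≤ b * c`, the last of which follows from the first two by positivity. -/
theorem IsShape.step {p : ℝ[X]} {N s : ℕ} (hN : 1 ≤ N) (h : IsShape p N (s + 1)) :
    IsShape ((1 + X) * p) (N + 1) s := by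
  have hlast := h.coeff_last
  push_cast at hlast
  have hnn : ∀ k ≤ N, 0 < p.coeff k := by
    intro k hk
    rcases hk.lt_or_eq with hk | rfl
    · exact h.pos k hk
    · rw [hlast]; positivity
  -- Log-concavity extends one index further because the next coefficient is negative.
  have hlc : ∀ k, k + 2 ≤ N + 1 → p.coeff k * p.coeff (k + 2) ≤ p.coeff (k + 1) ^ 2 := by
    intro k hk
    rcases hk.lt_or_eq with hk | hk
    · exact h.logConcave k (by omega)
    · rw [hk, h.coeff_top]
      nlinarith [hnn k (by omega), sq_nonneg (p.coeff (k + 1))]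
  refine ⟨fun k hk => ?_, ?_, ?_, fun k hk => ?_, fun k hk => ?_⟩
  · rcases k with _ | k
    · rw [coeff_one_add_X_mul_zero]
      exact hnn 0 (by omega)
    · rw [coeff_one_add_X_mul_succ]
      exact add_pos (hnn _ (by omega)) (hnn _ (by omega))
  · rw [coeff_one_add_X_mul_succ, h.coeff_top, hlast]
    ring
  · rw [coeff_one_add_X_mul_succ, h.coeff_top, h.coeff_zero _ (by omega)]
    ring
  · rcases k with _ | k
    · rw [coeff_one_add_X_mul_zero, coeff_one_add_X_mul_succ, coeff_one_add_X_mul_succ]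
      have h0 := hlc 0 (by omega)
      have p0 := hnn 0 (by omega)
      have p1 := hnn 1 (by omega)
      simp only [zero_add] at *
      nlinarith [mul_pos p0 p1]
    · rw [coeff_one_add_X_mul_succ, coeff_one_add_X_mul_succ, coeff_one_add_X_mul_succ]
      have h0 := hlc k (by omega)
      have h1 := hlc (k + 1) (by omega)
      have p0 := hnn k (by omega)
      have p1 := hnn (k + 1) (by omega)
      have p2 := hnn (k + 2) (by omega)
      simp only [add_assoc, Nat.reduceAdd] at *
      generalize p.coeff k = a at *
      generalize p.coeff (k + 1) = b at *
      generalize p.coeff (k + 2) = c at *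
      generalize p.coeff (k + 3) = d at *
      have h2 : a * d ≤ b * c := by
        rcases le_or_gt d 0 with hd | hd
        · exact (mul_nonpos_of_nonneg_of_nonpos p0.le hd).trans (mul_pos p1 p2).le
        · have hmul := mul_le_mul h0 h1 (mul_pos p1 hd).le (sq_nonneg b)
          have hbc := mul_pos p1 p2
          by_contra! hcon
          nlinarith [mul_lt_mul_of_pos_right hcon hbc]
      nlinarith
  · obtain ⟨k, rfl⟩ : ∃ j, k = j + 1 := ⟨k - 1, by omega⟩
    rw [coeff_one_add_X_mul_succ, h.coeff_zero _ (by omega), h.coeff_zero _ (by omega)]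
    ring

theorem IsShape.pow {p : ℝ[X]} {N s : ℕ} (hN : 1 ≤ N) (h : IsShape p N s) :
    IsShape ((1 + X) ^ s * p) (N + s) 0 := by
  induction s generalizing p N with
  | zero => simpa using h
  | succ s ih =>
    have := ih (by omega) (h.step hN)
    rwa [← mul_assoc, ← pow_succ, add_assoc, add_comm 1 s] at this

/-- A positive log-concave sequence is unimodal, so its peak is located by comparing the peak value
with its two neighbours. -/
theorem IsShape.unimodal {p : ℝ[X]} {N P : ℕ} (h : IsShape p N 0) (hP : P + 1 < N)
    (hup : ∀ i, i + 1 = P → p.coeff i ≤ p.coeff (i + 1))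
    (hdown : p.coeff (P + 1) ≤ p.coeff P) :
    (∀ i, i < P → p.coeff i ≤ p.coeff (i + 1)) ∧
    (∀ i, P ≤ i → i + 1 < N → p.coeff (i + 1) ≤ p.coeff i) := by
  constructor
  · have hback : ∀ j i, i + j + 1 = P → p.coeff i ≤ p.coeff (i + 1) := by
      intro j
      induction j with
      | zero => exact fun i hi => hup i (by omega)
      | succ j ih =>
        intro i hi
        have hi' := ih (i + 1) (by omega)
        have := h.logConcave i (by omega)
        have p0 := h.pos i (by omega)
        have p1 := h.pos (i + 1) (by omega)
        by_contra! hcon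
        simp only [add_assoc, Nat.reduceAdd] at *
        nlinarith
    exact fun i hi => hback (P - i - 1) i (by omega)
  · intro i hi
    induction i, hi using Nat.le_induction with
    | base => exact fun _ => hdown
    | succ i hi ih =>
      intro hiN
      have hi' := ih (by omega)
      have := h.logConcave i (by omega)
      have p0 := h.pos i (by omega)
      have p1 := h.pos (i + 1) (by omega)
      by_contra! hcon
      simp only [add_assoc, Nat.reduceAdd] at *
      nlinarith

theorem quotPoly_coeff (l : ℕ) (m : ℝ) (k : ℕ) :
    (quotPoly l m).coeff k = if k < l + 2 then quotCoeff l m k else 0 := by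
  simp [quotPoly, finsetSum_coeff, coeff_X_pow]

theorem quotPoly_isShape (l : ℕ) (hl : l ∈ ({2, 3, 4, 5} : Set ℕ)) (m : ℕ) :
    IsShape (quotPoly l m) l m := by
  have hm : (0 : ℝ) ≤ m := m.cast_nonneg
  simp only [Set.mem_insert_iff, Set.mem_singleton_iff] at hl
  refine ⟨fun k hk => ?_, ?_, ?_, fun k hk => ?_, fun k hk => ?_⟩
  · rw [quotPoly_coeff, if_pos (by omega)]
    rcases hl with rfl | rfl | rfl | rfl <;> interval_cases k <;> simp only [quotCoeff] <;>
      positivity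
  · rcases hl with rfl | rfl | rfl | rfl <;> simp [quotPoly_coeff, quotCoeff]
  · rcases hl with rfl | rfl | rfl | rfl <;> simp [quotPoly_coeff, quotCoeff]
  · rw [quotPoly_coeff, quotPoly_coeff, quotPoly_coeff, if_pos (by omega), if_pos (by omega),
      if_pos (by omega)]
    rcases hl with rfl | rfl | rfl | rfl
    · obtain rfl : k = 0 := by omega
      simp only [quotCoeff, Nat.reduceAdd]
      nlinarith
    · have : k ≤ 1 := by omega
      interval_cases k <;> simp only [quotCoeff, Nat.reduceAdd] <;> nlinarith
    · have : k ≤ 2 := by omega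
      interval_cases k <;> simp only [quotCoeff, Nat.reduceAdd] <;> nlinarith
    · have : k ≤ 3 := by omega
      interval_cases k <;> simp only [quotCoeff, Nat.reduceAdd] <;> nlinarith
  · rw [quotPoly_coeff, if_neg (by omega)]

/-! ### The peak -/

theorem coeff_product (l m : ℕ) (k : ℕ) :
    ((1 + X) ^ m * quotPoly l m).coeff k =
      ∑ j ∈ Finset.range (l + 2), quotCoeff l m j *
        if j ≤ k then (m.choose (k - j) : ℝ) else 0 := by
  rw [quotPoly, Finset.mul_sum, finsetSum_coeff]
  refine Finset.sum_congr rfl fun j _ => ?_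
  rw [mul_left_comm, coeff_C_mul, coeff_mul_X_pow', coeff_one_add_X_pow]

/-- Reflects `j > s` to `j < s` by the symmetry of the binomial coefficients about `r`; one of the
two truncated differences on the right is `0`. -/
theorem choose_even (r s j : ℕ) :
    (if j ≤ r + s then ((2 * r + 0).choose (r + s - j) : ℝ) else 0) =
      (2 * r + 0).choose (r + 0 + ((s - j) + (j - s))) := by
  split_ifs with h
  · rcases le_total j s with hjs | hjs
    · rw [show r + s - j = r + 0 + ((s - j) + (j - s)) by omega]
    · rw [← Nat.choose_symm_of_eq_add (n := 2 * r + 0) (a := r + s - j)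
        (b := r + 0 + ((s - j) + (j - s))) (by omega)]
  · rw [Nat.choose_eq_zero_of_lt (by omega), Nat.cast_zero]

/-- The analogue of `choose_even` for the row `2 * r + 1`, symmetric about `r + 1 / 2`. -/
theorem choose_odd (r s j : ℕ) :
    (if j ≤ r + s then ((2 * r + 1).choose (r + s - j) : ℝ) else 0) =
      (2 * r + 1).choose (r + 1 + ((s - 1 - j) + (j - s))) := by
  split_ifs with h
  · rcases lt_or_ge j s with hjs | hjs
    · rw [show r + s - j = r + 1 + ((s - 1 - j) + (j - s)) by omega]
    · rw [← Nat.choose_symm_of_eq_add (n := 2 * r + 1) (a := r + s - j)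
        (b := r + 1 + ((s - 1 - j) + (j - s))) (by omega)]
  · rw [Nat.choose_eq_zero_of_lt (by omega), Nat.cast_zero]

theorem choose_ratio (r p i : ℕ) :
    ((2 * r + p).choose (r + p + (i + 1)) : ℝ) =
      (2 * r + p).choose (r + p + i) * (r - i) / (r + p + i + 1) := by
  rw [eq_div_iff (by positivity)]
  have h := Nat.choose_succ_right_eq (2 * r + p) (r + p + i)
  rcases le_or_gt i r with hi | hi
  · rw [show 2 * r + p - (r + p + i) = r - i by omega] at h
    have h' : (((2 * r + p).choose (r + p + i + 1) * (r + p + i + 1) : ℕ) : ℝ) =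
        ((2 * r + p).choose (r + p + i) * (r - i) : ℕ) := by rw [h]
    push_cast [Nat.cast_sub hi] at h'
    exact h'
  · rw [Nat.choose_eq_zero_of_lt (by omega), Nat.choose_eq_zero_of_lt (by omega)]
    simp

/-- The binomial coefficients next to the middle of row `2 * r + p` are a common nonnegative multiple
`e` of polynomials in `r`, so a linear inequality between them reduces to one between
polynomials. -/
theorem exists_choose_param (r p : ℕ) : ∃ e : ℝ, 0 ≤ e ∧
    ((2 * r + p).choose (r + p + 0) : ℝ) =
      e * ((r + p + 1) * (r + p + 2) * (r + p + 3) * (r + p + 4) * (r + p + 5)) ∧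
    ((2 * r + p).choose (r + p + 1) : ℝ) =
      e * (r * (r + p + 2) * (r + p + 3) * (r + p + 4) * (r + p + 5)) ∧
    ((2 * r + p).choose (r + p + 2) : ℝ) =
      e * (r * (r - 1) * (r + p + 3) * (r + p + 4) * (r + p + 5)) ∧
    ((2 * r + p).choose (r + p + 3) : ℝ) =
      e * (r * (r - 1) * (r - 2) * (r + p + 4) * (r + p + 5)) ∧
    ((2 * r + p).choose (r + p + 4) : ℝ) =
      e * (r * (r - 1) * (r - 2) * (r - 3) * (r + p + 5)) ∧
    ((2 * r + p).choose (r + p + 5) : ℝ) =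
      e * (r * (r - 1) * (r - 2) * (r - 3) * (r - 4)) := by
  have h1 := choose_ratio r p 0
  have h2 := choose_ratio r p 1
  have h3 := choose_ratio r p 2
  have h4 := choose_ratio r p 3
  have h5 := choose_ratio r p 4
  norm_num only [Nat.reduceAdd, Nat.cast_ofNat, Nat.cast_zero, Nat.cast_one] at h1 h2 h3 h4 h5
  refine ⟨(2 * r + p).choose (r + p + 0) / ((r + p + 1) * (r + p + 2) * (r + p + 3) *
    (r + p + 4) * (r + p + 5)), by positivity, ?_, ?_, ?_, ?_, ?_, ?_⟩
  · field_simp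
  · rw [h1]; field_simp; ring_nf
  · rw [h2, h1]; field_simp; ring_nf
  · rw [h3, h2, h1]; field_simp; ring_nf
  · rw [h4, h3, h2, h1]; field_simp; ring_nf
  · rw [h5, h4, h3, h2, h1]; field_simp; ring_nf

set_option maxHeartbeats 4000000 in
/-- By `exists_choose_param`, each difference is `e` times a polynomial in `r = ⌊m / 2⌋`, all of
whose coefficients turn out to be nonnegative. -/
theorem coeff_peak (l : ℕ) (hl : l ∈ ({2, 3, 4, 5} : Set ℕ)) (m : ℕ) :
    ((1 + X) ^ m * quotPoly l m).coeff ((m + l) / 2 - 1) ≤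
      ((1 + X) ^ m * quotPoly l m).coeff ((m + l) / 2) ∧
    ((1 + X) ^ m * quotPoly l m).coeff ((m + l) / 2 + 1) ≤
      ((1 + X) ^ m * quotPoly l m).coeff ((m + l) / 2) := by
  simp only [Set.mem_insert_iff, Set.mem_singleton_iff] at hl
  obtain ⟨r, hr⟩ := m.even_or_odd'
  have hr0 : (0 : ℝ) ≤ r := r.cast_nonneg
  rcases hr with hr | hr
  · rw [← add_zero (2 * r)] at hr
    subst hr
    obtain ⟨e, he, h0, h1, h2, h3, h4, h5⟩ := exists_choose_param r 0
    have hmid : (2 * r + 0 + l) / 2 = r + l / 2 := by omega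
    have hpred : (2 * r + 0 + l) / 2 - 1 = r + (l / 2 - 1) := by omega
    have hsucc : (2 * r + 0 + l) / 2 + 1 = r + (l / 2 + 1) := by omega
    rw [hpred, hsucc, hmid]
    simp only [coeff_product, choose_even]
    rcases hl with rfl | rfl | rfl | rfl <;>
    · simp only [Finset.sum_range_succ, Finset.sum_range_zero, Nat.reduceAdd, Nat.reduceSub,
        Nat.reduceDiv, quotCoeff, h0, h1, h2, h3, h4, h5]
      push_cast
      constructor <;> rw [← sub_nonneg] <;> ring_nf <;> positivity
  · subst hr
    obtain ⟨e, he, h0, h1, h2, h3, h4, h5⟩ := exists_choose_param r 1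
    have hmid : (2 * r + 1 + l) / 2 = r + (l + 1) / 2 := by omega
    have hpred : (2 * r + 1 + l) / 2 - 1 = r + ((l + 1) / 2 - 1) := by omega
    have hsucc : (2 * r + 1 + l) / 2 + 1 = r + ((l + 1) / 2 + 1) := by omega
    rw [hpred, hsucc, hmid]
    simp only [coeff_product, choose_odd]
    rcases hl with rfl | rfl | rfl | rfl <;>
    · simp only [Finset.sum_range_succ, Finset.sum_range_zero, Nat.reduceAdd, Nat.reduceSub,
        Nat.reduceDiv, quotCoeff, h0, h1, h2, h3, h4, h5]
      push_cast
      constructor <;> rw [← sub_nonneg] <;> ring_nf <;> positivity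

theorem normCoeff_eq (m l : ℕ) (hl : l ∈ ({2, 3, 4, 5} : Set ℕ)) (i : ℕ) :
    lollipopNormCoeff (m + 2) l i = ((1 + X) ^ m * quotPoly l m).coeff i := by
  rw [← charpoly_lollipop m l hl, lollipopNormCoeff, distCoeff, coeff_neg, Fintype.card_fin,
    ← mul_assoc, ← pow_add, show m + 2 + l - 1 - 1 + (m + 2 + l - 1) = 2 * (m + l) + 1 by omega,
    pow_succ, pow_mul]
  simp

/-- For `t ≥ 3` and `ℓ ∈ {2,3,4,5}`, the sequence
`(-1)^(n-1) c_0(L(t,ℓ)), …, (-1)^(n-1) c_(n-2)(L(t,ℓ))` (with `n = t + ℓ - 1`) is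
unimodal with peak at index `⌊(n-1)/2⌋`. -/
theorem lollipop_distCoeff_unimodal_peak (t l : ℕ) (ht : 3 ≤ t)
    (hl : l ∈ ({2, 3, 4, 5} : Set ℕ)) :
    (∀ i : ℕ, i < (t + l - 1 - 1) / 2 →
      lollipopNormCoeff t l i ≤ lollipopNormCoeff t l (i + 1)) ∧
    (∀ i : ℕ, (t + l - 1 - 1) / 2 ≤ i → i < t + l - 1 - 2 →
      lollipopNormCoeff t l (i + 1) ≤ lollipopNormCoeff t l i) := by
  obtain ⟨m, rfl⟩ : ∃ m, t = m + 2 := ⟨t - 2, by omega⟩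
  have hl2 : 2 ≤ l := by
    simp only [Set.mem_insert_iff, Set.mem_singleton_iff] at hl
    omega
  simp only [normCoeff_eq m l hl]
  rw [show m + 2 + l - 1 - 1 = m + l by omega]
  obtain ⟨hup, hdown⟩ := coeff_peak l hl m
  have hshape := (quotPoly_isShape l hl m).pow (by omega)
  obtain ⟨h1, h2⟩ := hshape.unimodal (P := (m + l) / 2) (by omega)
    (fun i hi => by rwa [← hi, Nat.add_sub_cancel] at hup) hdown
  exact ⟨h1, fun i hi hi' => h2 i hi (by omega)⟩
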